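/- Define the degree-sketch state space as pairs (E, M) of natural numbers with 0 ≤ M ≤ 15, with estimator v(E, M) = (2^E − 1)·16 + 2^E·M, and define the one-step update as the probability distribution that, from state (E, M), moves with probability 2^(−E) to the successor state next(E, M) — where next(E, M) = (E, M+1) if M < 15 and next(E, 15) = (E+1, 0) — and stays at (E, M) with probability 1 − 2^(−E). Then for every state s, the expected value of v after one update step equals v(s) + 1. -/

import Mathlib

/-!
Consecutive states of the sketch at exponent `E` have estimates differing by exactly `2 ^ E`, also
across a mantissa overflow. The move is made with probability `2 ^ (-E)`, so the expected increase
of the estimate is `2 ^ (-E) * 2 ^ E = 1`.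
-/

/-- Successor state of the degree sketch: increment the mantissa, and on
mantissa overflow (M = 15) reset it to 0 and increment the exponent. -/
def sketchNext : ℕ × ℕ → ℕ × ℕ
  | (E, M) => if M < 15 then (E, M + 1) else (E + 1, 0)

/-- Estimator of the degree sketch: `v(E, M) = (2^E − 1)·16 + 2^E·M`. -/
noncomputable def sketchVal (s : ℕ × ℕ) : ℝ :=
  ((2 : ℝ) ^ s.1 - 1) * 16 + (2 : ℝ) ^ s.1 * s.2

/-- One update step of the degree sketch (moving with probability `2^(−E)` to
`next (E, M)` and staying put with probability `1 − 2^(−E)`) increases the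
expected value of the estimator by exactly 1. -/
theorem sketch_step_mean_add_one (s : ℕ × ℕ) (hM : s.2 ≤ 15) :
    ((1 : ℝ) / 2) ^ s.1 * sketchVal (sketchNext s)
      + (1 - ((1 : ℝ) / 2) ^ s.1) * sketchVal s = sketchVal s + 1 := by
  obtain ⟨E, M⟩ := s
  have hM' : M ≤ 15 := hM
  have hpow : ((1 : ℝ) / 2) ^ E * 2 ^ E = 1 := by
    rw [← mul_pow]; norm_num
  -- On overflow too: `v (E + 1, 0) = (2 ^ (E + 1) - 1) * 16` is what `v (E, 16)` would be.
  have hgap : sketchVal (sketchNext (E, M)) = sketchVal (E, M) + 2 ^ E := by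
    by_cases h : M < 15
    · simp only [sketchNext, sketchVal, if_pos h]
      push_cast
      ring
    · obtain rfl : M = 15 := by omega
      simp only [sketchNext, sketchVal, if_neg h]
      push_cast
      ring
  rw [hgap]
  linear_combination hpow
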